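/- (Bernal's lemma) Let X be a separable metrizable topological vector space over ℝ, and let A, B ⊂ X with A ∩ B = ∅. Assume A is maximal lineable in X (there exists a linear subspace M of X with dim M = dim X and M \ {0} ⊂ A), B is dense-lineable in X (there exists a dense linear subspace D of X with D \ {0} ⊂ B), and A + B ⊂ A. Then A is maximal dense-lineable in X: there exists a dense linear subspace E of X with dim E = dim X and E \ {0} ⊂ A. -/

import Mathlib

open Filter Topology

/-- Bernal's lemma: in a separable metrizable topological vector space, if `A` is
maximal lineable, `B` is dense-lineable, `A ∩ B = ∅` and `A + B ⊆ A`, then `A`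
is maximal dense-lineable. -/
theorem stmt8 {X : Type*} [AddCommGroup X] [Module ℝ X] [TopologicalSpace X]
    [IsTopologicalAddGroup X] [ContinuousSMul ℝ X]
    [TopologicalSpace.SeparableSpace X] [TopologicalSpace.MetrizableSpace X]
    (A B : Set X) (hAB : A ∩ B = ∅)
    (hA : ∃ M : Submodule ℝ X, Module.rank ℝ M = Module.rank ℝ X ∧
      (M : Set X) \ {0} ⊆ A)
    (hB : ∃ D : Submodule ℝ X, Dense (D : Set X) ∧ (D : Set X) \ {0} ⊆ B)
    (hsum : ∀ x ∈ A, ∀ y ∈ B, x + y ∈ A) :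
    ∃ E : Submodule ℝ X, Dense (E : Set X) ∧
      Module.rank ℝ E = Module.rank ℝ X ∧ (E : Set X) \ {0} ⊆ A := by
  obtain ⟨M, hM, hMA⟩ := hA
  obtain ⟨D, hD, hDB⟩ := hB
  by_cases hfin : Module.rank ℝ X < Cardinal.aleph0
  · haveI : Module.Finite ℝ X := Module.rank_lt_aleph0_iff.mp hfin
    have hMt : M = ⊤ := by
      apply Submodule.eq_top_of_finrank_eq
      simp only [Module.finrank, hM]
    refine ⟨M, ?_, hM, hMA⟩
    rw [hMt]
    simp
  letI := TopologicalSpace.metrizableSpaceMetric X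
  haveI : SecondCountableTopology X := UniformSpace.secondCountable_of_separable X
  obtain ⟨b, hbc, hbe, hb⟩ := TopologicalSpace.exists_countable_basis X
  let v := Module.Basis.ofVectorSpace ℝ M
  haveI : Infinite (Module.Basis.ofVectorSpaceIndex ℝ M) := by
    by_contra hni
    rw [not_infinite_iff_finite] at hni
    haveI : Module.Finite ℝ M := Module.Finite.of_basis v
    exact hfin (hM ▸ Module.rank_lt_aleph0 ℝ M)
  haveI : Countable b := hbc.to_subtype
  obtain ⟨g, hg⟩ := exists_injective_nat b
  let e : b → Module.Basis.ofVectorSpaceIndex ℝ M :=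
    fun u => Infinite.natEmbedding _ (g u)
  have he : Function.Injective e := (Infinite.natEmbedding _).injective.comp hg
  have key : ∀ u : b, ∃ d ∈ D, ∃ t : ℝ, t ≠ 0 ∧ d + t • (v (e u) : X) ∈ (u : Set X) := by
    intro u
    have hne : (u : Set X).Nonempty := by
      rw [Set.nonempty_iff_ne_empty]
      intro h
      exact hbe (h ▸ u.2)
    obtain ⟨d, hdu, hdD⟩ := hD.inter_open_nonempty _ (hb.isOpen u.2) hne
    refine ⟨d, hdD, ?_⟩
    have hc : Continuous (fun t : ℝ => d + t • (v (e u) : X)) := by fun_prop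
    have h0 : (fun t : ℝ => d + t • (v (e u) : X)) ⁻¹' (u : Set X) ∈ 𝓝 (0 : ℝ) := by
      apply ((hb.isOpen u.2).preimage hc).mem_nhds
      simpa using hdu
    have h1 : ∀ᶠ t in 𝓝[≠] (0 : ℝ), t ≠ 0 ∧ d + t • (v (e u) : X) ∈ (u : Set X) := by
      filter_upwards [self_mem_nhdsWithin, mem_nhdsWithin_of_mem_nhds h0] with t ht ht'
      exact ⟨ht, ht'⟩
    exact h1.exists
  choose d hd t ht htu using key
  let f : b → D := fun u => (t u)⁻¹ • ⟨d u, hd u⟩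
  let L : M →ₗ[ℝ] D := v.constr ℝ (Function.extend e f 0)
  have hL : ∀ u, L (v (e u)) = f u := by
    intro u
    simp only [L, Module.Basis.constr_basis, he.extend_apply]
  let T : M →ₗ[ℝ] X := M.subtype + D.subtype.comp L
  have hT : ∀ m, T m = (m : X) + (L m : X) := fun m => rfl
  have hTA : ∀ m : M, m ≠ 0 → T m ∈ A := by
    intro m hm
    have hmA : (m : X) ∈ A := hMA ⟨m.2, by simpa using hm⟩
    rw [hT]
    by_cases h : L m = 0
    · simpa [h] using hmA
    · exact hsum _ hmA _ (hDB ⟨(L m).2, by simpa using h⟩)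
  have hinj : Function.Injective T := by
    rw [← LinearMap.ker_eq_bot, LinearMap.ker_eq_bot']
    intro m hm0
    by_contra hm
    have hmA : (m : X) ∈ A := hMA ⟨m.2, by simpa using hm⟩
    rw [hT] at hm0
    have hmD : (m : X) ∈ D := by
      rw [eq_neg_of_add_eq_zero_left hm0]
      exact D.neg_mem (L m).2
    have : (m : X) ∈ A ∩ B := ⟨hmA, hDB ⟨hmD, by simpa using hm⟩⟩
    rw [hAB] at this
    exact this
  refine ⟨LinearMap.range T, ?_, ?_, ?_⟩
  · rw [hb.dense_iff]
    intro o ho hne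
    refine ⟨T (t ⟨o, ho⟩ • v (e ⟨o, ho⟩)), ?_, LinearMap.mem_range_self _ _⟩
    have : T (t ⟨o, ho⟩ • v (e ⟨o, ho⟩))
        = d ⟨o, ho⟩ + t ⟨o, ho⟩ • (v (e ⟨o, ho⟩) : X) := by
      rw [map_smul, hT, hL, smul_add, add_comm]
      simp only [f, Submodule.coe_smul]
      rw [smul_inv_smul₀ (ht _)]
    rw [this]
    exact htu ⟨o, ho⟩
  · rw [← hM]
    exact (LinearEquiv.ofInjective T hinj).rank_eq.symm
  · rintro x ⟨⟨m, rfl⟩, hx⟩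
    apply hTA
    rintro rfl
    simp at hx
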